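/- Let K be a UFD of characteristic p > 0 and let d be a nonzero K-derivation of K[x,y] such that d(x) and d(y) are coprime. The following conditions are equivalent: (1) K[x,y]^d = K[x^p, y^p, f] for some polynomial f ∈ K[x,y] \ K[x^p,y^p]; (2) d is a Jacobian derivation, i.e. d = d_g for some g ∈ K[x,y]; (3) d* = 0 and K[x,y]^d ≠ K[x^p, y^p]; (4) there exists f ∈ K[x,y] \ K[x^p,y^p] such that d(f) = 0 and d(f̄) = 0, where f̄ = gcd(∂f/∂x, ∂f/∂y). -/

import Mathlib

open MvPolynomial

/-!
Write `A = K[x, y]` and `B = K[x^p, y^p]`, the ring of polynomials with vanishing partial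
derivatives, and let `ω = d(y) dx - d(x) dy`, so that `d = d_g` means `dg = ω`. Since `d(x)` and
`d(y)` are coprime, `d q = 0` if and only if `dq = t ω` for some `t`, and then commuting the mixed
partial derivatives of `q` gives `d t = -t d*`.

If `d* = 0` and `f` is a nonconstant element of `ker d`, replacing `f` by `t` lowers the degree, so
some `s` satisfies `ds = c ω` with `0 ≠ c ∈ B`. The Euler operators `x ∂/∂x` and `y ∂/∂y` satisfy
`E^p = E`, which lets one subtract from `s` an element of `B` so that `c` divides the difference;
the quotient is a potential of `ω`.

Conversely, a potential `f` of `ω` is a *differential generator* of `ker d`: every `q ∈ ker d` has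
`dq = t df` with `t ∈ ker d`. Elements of degree `p` over a field can be exchanged, so
`Frac(B)(f)` contains `ker d`, and `c q = P(f)` for some `c ∈ B` and some polynomial `P` over `B`
of degree less than `p`. Differentiating `deg P` times shows that `c` divides the leading
coefficient of `P`, whence `ker d = B[f]` by induction on the degree.

Finally, if `ker d = B[f]`, then `df = h ω`, and `h` must be a unit. A prime `π` dividing `h` and
lying in `B` divides `f - γ` with `γ ∈ B`, which the leading coefficient argument excludes. If `π`
is not in `B`, the exchange argument in the residue field of `π` gives `π ∣ β f - γ` with
`β, γ ∈ B` and `π ∤ β`; differentiating improves this to `π ^ 2`, so `π ^ p ∈ B` divides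
`(β f - γ) ^ (p - 1)`, whose leading coefficient `β ^ (p - 1)` is prime to `π`.
-/

section Preliminaries

lemma exists_eq_mul_of_mul_add_mul_eq_zero {R : Type*} [CommRing R] [IsDomain R]
    [DecompositionMonoid R] {u v a b : R} (huv : IsRelPrime u v) (h : u * a + v * b = 0) :
    ∃ t, a = t * v ∧ b = -(t * u) := by
  obtain ⟨t, rfl⟩ := huv.symm.dvd_of_dvd_mul_left (⟨-b, by linear_combination h⟩ : v ∣ u * a)
  rcases eq_or_ne v 0 with rfl | hv
  · obtain ⟨e, he⟩ := (huv dvd_rfl (dvd_zero u)).exists_right_inv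
    exact ⟨-(e * b), by ring, by linear_combination -b * he⟩
  · exact ⟨t, mul_comm v t, mul_left_cancel₀ hv (by linear_combination h)⟩

lemma exists_degree_lt_aeval_eq {R A : Type*} [CommRing R] [Nontrivial R] [Ring A] [Algebra R A]
    {f : A} {n : ℕ} (hn : n ≠ 0) {a : R} (ha : algebraMap R A a = f ^ n) (P : Polynomial R) :
    ∃ Q : Polynomial R, Q.degree < n ∧ Polynomial.aeval f Q = Polynomial.aeval f P := by
  refine ⟨P %ₘ (.X ^ n - .C a), ?_, Polynomial.aeval_modByMonic_eq_self_of_root (by simp [ha])⟩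
  rw [← Polynomial.degree_X_pow_sub_C (Nat.pos_of_ne_zero hn) a]
  exact Polynomial.degree_modByMonic_lt P (Polynomial.monic_X_pow_sub_C a hn)

end Preliminaries

section FieldExtensions

lemma minpoly_eq_X_pow_sub_C_of_notMem_range {E F : Type*} [Field E] [Field F] [Algebra E F]
    {p : ℕ} [Fact p.Prime] [CharP F p] {x : F} {a : E} (hxa : algebraMap E F a = x ^ p)
    (hx : x ∉ (algebraMap E F).range) :
    minpoly E x = Polynomial.X ^ p - Polynomial.C a := by
  have hp : p.Prime := Fact.out
  refine (minpoly.eq_of_irreducible_of_monic ?_ (by simp [hxa])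
    (Polynomial.monic_X_pow_sub_C a hp.ne_zero)).symm
  rw [X_pow_sub_C_irreducible_iff_of_prime hp]
  rintro b rfl
  rw [map_pow] at hxa
  exact hx ⟨b, frobenius_inj F p hxa⟩

lemma aeval_derivative_eq_zero_of_notMem_range {E F : Type*} [Field E] [Field F] [Algebra E F]
    {p : ℕ} [Fact p.Prime] [CharP F p] {x : F} {a : E} (hxa : algebraMap E F a = x ^ p)
    (hx : x ∉ (algebraMap E F).range) {P : Polynomial E} (hP : Polynomial.aeval x P = 0) :
    Polynomial.aeval x P.derivative = 0 := by
  have : CharP E p := (algebraMap E F).charP (algebraMap E F).injective p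
  obtain ⟨Q, rfl⟩ := minpoly.dvd E x hP
  rw [Polynomial.derivative_mul, map_add, map_mul, map_mul, minpoly.aeval, zero_mul, add_zero,
    minpoly_eq_X_pow_sub_C_of_notMem_range hxa hx]
  simp [Polynomial.derivative_X_pow]

lemma mem_closure_insert_iff_mem_adjoin {F : Type*} [Field F] {S : Set F} {x y : F} :
    y ∈ Subfield.closure (insert x S) ↔
      y ∈ IntermediateField.adjoin (Subfield.closure S) {x} := by
  rw [← IntermediateField.mem_toSubfield, IntermediateField.adjoin_toSubfield,
    Subfield.closure_union, Set.insert_eq, Subfield.closure_union, sup_comm,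
    Subfield.algebraMap_ofSubfield, Subfield.coe_subtype, Subtype.range_coe, Subfield.closure_eq]

lemma mem_closure_insert_exchange {F : Type*} [Field F] {p : ℕ} [Fact p.Prime] [CharP F p]
    {S : Set F} {x y : F} (hx : x ^ p ∈ Subfield.closure S)
    (hy : y ∈ Subfield.closure (insert x S)) (hyS : y ∉ Subfield.closure S) :
    x ∈ Subfield.closure (insert y S) := by
  have hp : p.Prime := Fact.out
  rw [mem_closure_insert_iff_mem_adjoin] at hy ⊢
  set L := Subfield.closure S
  have hxL : x ∉ (algebraMap L F).range := by
    rintro ⟨a, rfl⟩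
    have h : IntermediateField.adjoin L {algebraMap L F a} = ⊥ := by simp
    rw [h, IntermediateField.mem_bot] at hy
    obtain ⟨b, rfl⟩ := hy
    exact hyS b.2
  have hxint : IsIntegral L x :=
    .of_pow hp.pos (isIntegral_algebraMap (x := (⟨x ^ p, hx⟩ : L)))
  have hrank : Module.finrank L (IntermediateField.adjoin L {x}) = p := by
    rw [IntermediateField.adjoin.finrank hxint,
      minpoly_eq_X_pow_sub_C_of_notMem_range (a := (⟨x ^ p, hx⟩ : L)) rfl hxL,
      Polynomial.natDegree_X_pow_sub_C]
  have := IntermediateField.adjoin.finiteDimensional hxint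
  have hle : IntermediateField.adjoin L {y} ≤ IntermediateField.adjoin L {x} := by
    simpa using hy
  rcases hp.eq_one_or_self_of_dvd _ (hrank ▸ IntermediateField.finrank_dvd_of_le_right hle)
    with h1 | hyp
  · rw [IntermediateField.finrank_adjoin_simple_eq_one_iff, IntermediateField.mem_bot] at h1
    obtain ⟨b, rfl⟩ := h1
    exact absurd b.2 hyS
  · rw [IntermediateField.eq_of_le_of_finrank_eq hle (hyp.trans hrank.symm)]
    exact IntermediateField.mem_adjoin_simple_self L x

lemma exists_mul_eq_of_mem_closure {A F : Type*} [CommRing A] [Field F] [Algebra A F]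
    {C : Subring A} {x : F} (hx : x ∈ Subfield.closure (algebraMap A F '' C)) :
    ∃ a ∈ C, ∃ b ∈ C, algebraMap A F b ≠ 0 ∧ x * algebraMap A F b = algebraMap A F a := by
  obtain ⟨_, hy, _, hz, rfl⟩ := Subfield.mem_closure_iff.mp hx
  rw [← RingHom.map_closure, Subring.closure_eq] at hy hz
  obtain ⟨a, ha, rfl⟩ := hy
  obtain ⟨b, hb, rfl⟩ := hz
  by_cases h0 : algebraMap A F b = 0
  · exact ⟨0, C.zero_mem, 1, C.one_mem, by simp, by simp [h0]⟩
  · exact ⟨a, ha, b, hb, h0, div_mul_cancel₀ _ h0⟩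

end FieldExtensions

/-- The ring of constants `A^d`, the kernel of the derivation `d`, as a subalgebra. -/
def derivationKer {R A M : Type*} [CommRing R] [CommRing A] [AddCommGroup M] [Algebra R A]
    [Module A M] [Module R M] (d : Derivation R A M) : Subalgebra R A where
  carrier := {a | d a = 0}
  mul_mem' {a b} ha hb := by simp_all
  add_mem' {a b} ha hb := by simp_all
  algebraMap_mem' r := d.map_algebraMap r

section PartialDerivatives

variable {σ K : Type*} [CommRing K]

lemma pderiv_pderiv_comm (i j : σ) (q : MvPolynomial σ K) :
    pderiv i (pderiv j q) = pderiv j (pderiv i q) := by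
  classical
  have h : ⁅(pderiv i : Derivation K (MvPolynomial σ K) _),
      (pderiv j : Derivation K (MvPolynomial σ K) _)⁆ = 0 := by
    refine MvPolynomial.derivation_ext fun k => ?_
    simp only [Derivation.commutator_apply, pderiv_X, Pi.single_apply, Derivation.coe_zero,
      Pi.zero_apply]
    split_ifs <;> simp
  simpa [Derivation.commutator_apply, sub_eq_zero] using congr($h q)

lemma totalDegree_pderiv_lt {i : σ} {q : MvPolynomial σ K} (h : pderiv i q ≠ 0) :
    (pderiv i q).totalDegree < q.totalDegree := by
  obtain ⟨m, hm, hmd⟩ := Finset.exists_mem_eq_sup _ (support_nonempty.mpr h)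
    (fun m => m.sum fun _ e => e)
  have hc : m + Finsupp.single i 1 ∈ q.support := by
    rw [mem_support_iff, coeff_pderiv] at hm
    exact mem_support_iff.mpr (left_ne_zero_of_mul hm)
  have hle := le_totalDegree hc
  rw [Finsupp.sum_add_index' (by simp) (by simp), Finsupp.sum_single_index rfl] at hle
  rw [totalDegree, hmd]
  exact hle

lemma not_dvd_pderiv [IsDomain K] {i : σ} {q : MvPolynomial σ K} (h : pderiv i q ≠ 0) :
    ¬ q ∣ pderiv i q := fun hdvd =>
  (totalDegree_pderiv_lt h).not_ge (totalDegree_le_of_dvd_of_isDomain hdvd h)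

lemma pderiv_eq_zero_of_isUnit [IsDomain K] {u : MvPolynomial σ K} (hu : IsUnit u) (i : σ) :
    pderiv i u = 0 := by
  obtain ⟨r, -, rfl⟩ := isUnit_iff_eq_C_of_isReduced.mp hu
  exact pderiv_C

/-- The Euler operator `q ↦ xᵢ ∂q/∂xᵢ`, diagonal on monomials. -/
noncomputable def euler (i : σ) : Module.End K (MvPolynomial σ K) :=
  LinearMap.mulLeft K (X i) ∘ₗ (pderiv i).toLinearMap

lemma euler_apply (i : σ) (q : MvPolynomial σ K) : euler i q = X i * pderiv i q := rfl

lemma coeff_euler (i : σ) (q : MvPolynomial σ K) (m : σ →₀ ℕ) :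
    coeff m (euler i q) = m i * coeff m q := by
  classical
  induction q using MvPolynomial.induction_on' with
  | monomial n r =>
    rw [euler_apply, X_mul_pderiv_monomial, coeff_smul, coeff_monomial, nsmul_eq_mul]
    split_ifs with h
    · rw [h]
    · rw [mul_zero, mul_zero]
  | add a b ha hb => rw [map_add, coeff_add, coeff_add, ha, hb, mul_add]

lemma commute_euler (i j : σ) : Commute (euler (K := K) i) (euler j) := by
  refine LinearMap.ext fun q => MvPolynomial.ext _ _ fun m => ?_
  simp only [Module.End.mul_apply, coeff_euler, mul_left_comm]

lemma coeff_euler_pow (i : σ) (k : ℕ) (q : MvPolynomial σ K) (m : σ →₀ ℕ) :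
    coeff m ((euler i ^ k) q) = (m i : K) ^ k * coeff m q := by
  induction k with
  | zero => simp
  | succ k ih => rw [pow_succ', Module.End.mul_apply, coeff_euler, ih, pow_succ', mul_assoc]

lemma euler_pow_char (p : ℕ) [Fact p.Prime] [CharP K p] (i : σ) :
    euler (K := K) i ^ p = euler i := by
  refine LinearMap.ext fun q => MvPolynomial.ext _ _ fun m => ?_
  rw [coeff_euler_pow, coeff_euler, ← frobenius_def, map_natCast]

variable (σ K) in
/-- The polynomials all of whose partial derivatives vanish. In characteristic `p` they form the
algebra generated by the `p`-th powers of the variables. -/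
noncomputable def pderivConstants : Subalgebra K (MvPolynomial σ K) :=
  ⨅ i, derivationKer (pderiv i)

lemma mem_pderivConstants {q : MvPolynomial σ K} :
    q ∈ pderivConstants σ K ↔ ∀ i, pderiv i q = 0 :=
  Algebra.mem_iInf

lemma pow_mem_pderivConstants (p : ℕ) [CharP K p] (q : MvPolynomial σ K) :
    q ^ p ∈ pderivConstants σ K :=
  mem_pderivConstants.mpr fun i => by simp

lemma dvd_of_mem_support_of_mem_pderivConstants [IsDomain K] (p : ℕ) [CharP K p]
    {q : MvPolynomial σ K} (hq : q ∈ pderivConstants σ K) {m : σ →₀ ℕ} (hm : m ∈ q.support)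
    (i : σ) : p ∣ m i := by
  rw [← CharP.cast_eq_zero_iff K p]
  have h : coeff m (euler i q) = 0 := by
    rw [euler_apply, mem_pderivConstants.mp hq, mul_zero, coeff_zero]
  rw [coeff_euler] at h
  exact (mul_eq_zero.mp h).resolve_right (mem_support_iff.mp hm)

lemma adjoin_range_X_pow [IsDomain K] (p : ℕ) [CharP K p] :
    Algebra.adjoin K (Set.range fun i : σ => (X i : MvPolynomial σ K) ^ p) =
      pderivConstants σ K := by
  refine le_antisymm (Algebra.adjoin_le ?_) fun q hq => ?_
  · rintro _ ⟨i, rfl⟩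
    exact pow_mem_pderivConstants p (X i)
  rw [q.as_sum]
  refine Subalgebra.sum_mem _ fun m hm => ?_
  rw [monomial_eq]
  refine Subalgebra.mul_mem _ (Subalgebra.algebraMap_mem _ _) (Subalgebra.prod_mem _ fun i _ => ?_)
  obtain ⟨k, hk⟩ := dvd_of_mem_support_of_mem_pderivConstants p hq hm i
  simp only [hk, pow_mul]
  exact Subalgebra.pow_mem _ (Algebra.subset_adjoin (Set.mem_range_self i)) k

end PartialDerivatives

section Euler

lemma exists_forall_apply_eq_zero_and_sub_mem {R M ι : Type*} [CommRing R] [AddCommGroup M]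
    [Module R M] [Finite ι] {E : ι → Module.End R M} (hcomm : ∀ i j, Commute (E i) (E j)) {n : ℕ}
    (hE : ∀ i, E i ^ (n + 2) = E i) {N : Submodule R M} (hN : ∀ i, ∀ x ∈ N, E i x ∈ N)
    {s : M} (hs : ∀ i, E i s ∈ N) : ∃ s₀, (∀ i, E i s₀ = 0) ∧ s - s₀ ∈ N := by
  classical
  cases nonempty_fintype ι
  suffices h : ∀ T : Finset ι, ∃ s₀, (∀ i ∈ T, E i s₀ = 0) ∧ s - s₀ ∈ N by
    simpa using h Finset.univ
  intro T
  induction T using Finset.induction_on with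
  | empty => exact ⟨s, by simp⟩
  | insert i T _ ih =>
    obtain ⟨s₁, hs₁, hss₁⟩ := ih
    have hstable : ∀ k, (E i ^ (k + 1)) s₁ ∈ N := by
      intro k
      induction k with
      | zero => simpa using N.sub_mem (hs i) (hN i _ hss₁)
      | succ k ih => exact pow_succ' (E i) (k + 1) ▸ hN i _ ih
    -- `1 - E i ^ (n + 1)` is a projection onto the kernel of `E i`.
    refine ⟨s₁ - (E i ^ (n + 1)) s₁, ?_, ?_⟩
    · simp only [Finset.forall_mem_insert, map_sub, ← Module.End.mul_apply, ← pow_succ', hE,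
        sub_self, true_and]
      intro j hj
      rw [((hcomm j i).pow_right (n + 1)).eq, Module.End.mul_apply, hs₁ j hj, map_zero, sub_zero]
    · rw [← sub_add]
      exact N.add_mem hss₁ (hstable n)

variable {σ K : Type*} [CommRing K]

lemma exists_mem_pderivConstants_dvd_sub [IsDomain K] [Finite σ] (p : ℕ) [Fact p.Prime] [CharP K p]
    {c s : MvPolynomial σ K} (hc : c ∈ pderivConstants σ K) (hcs : ∀ i, c ∣ pderiv i s) :
    ∃ s₀ ∈ pderivConstants σ K, c ∣ s - s₀ := by
  have hp : 2 ≤ p := (Fact.out : p.Prime).two_le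
  rw [mem_pderivConstants] at hc
  have hstable : ∀ i, ∀ q ∈ (Ideal.span {c}).restrictScalars K,
      euler i q ∈ (Ideal.span {c}).restrictScalars K := by
    intro i q hq
    obtain ⟨t, rfl⟩ := Ideal.mem_span_singleton.mp hq
    refine Ideal.mem_span_singleton.mpr ⟨X i * pderiv i t, ?_⟩
    rw [euler_apply, pderiv_mul, hc i]
    ring
  obtain ⟨s₀, hs₀, hdvd⟩ := exists_forall_apply_eq_zero_and_sub_mem commute_euler
    (fun i => by rw [Nat.sub_add_cancel hp, euler_pow_char]) hstable
    (fun i => Ideal.mem_span_singleton.mpr ((hcs i).mul_left (X i)))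
  exact ⟨s₀, mem_pderivConstants.mpr fun i => (mul_eq_zero.mp (hs₀ i)).resolve_left (X_ne_zero i),
    Ideal.mem_span_singleton.mp hdvd⟩

end Euler

section AlgebraMapToField

variable {σ K k : Type*} [CommRing K] [Field k] [Algebra (MvPolynomial σ K) k]

lemma algebraMap_mem_of_X_mem {L : Subfield k}
    (hC : ∀ r, algebraMap (MvPolynomial σ K) k (C r) ∈ L)
    (hX : ∀ i, algebraMap (MvPolynomial σ K) k (X i) ∈ L) (q : MvPolynomial σ K) :
    algebraMap (MvPolynomial σ K) k q ∈ L := by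
  induction q using MvPolynomial.induction_on with
  | C r => exact hC r
  | add a b ha hb => rw [map_add]; exact L.add_mem ha hb
  | mul_X a i ha => rw [map_mul]; exact L.mul_mem ha (hX i)

lemma exists_aeval_X_eq {L : Subfield k} {i : σ}
    (hC : ∀ r, algebraMap (MvPolynomial σ K) k (C r) ∈ L)
    (hX : ∀ j ≠ i, algebraMap (MvPolynomial σ K) k (X j) ∈ L) (q : MvPolynomial σ K) :
    ∃ P : Polynomial L,
      Polynomial.aeval (algebraMap (MvPolynomial σ K) k (X i)) P = algebraMap _ k q ∧
      Polynomial.aeval (algebraMap (MvPolynomial σ K) k (X i)) P.derivative =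
        algebraMap _ k (pderiv i q) := by
  induction q using MvPolynomial.induction_on with
  | C r => exact ⟨.C ⟨_, hC r⟩, by simp [Subfield.algebraMap_ofSubfield], by simp⟩
  | add a b ha hb =>
    obtain ⟨P, hP, hP'⟩ := ha
    obtain ⟨Q, hQ, hQ'⟩ := hb
    exact ⟨P + Q, by simp [hP, hQ], by simp [hP', hQ']⟩
  | mul_X a j ha =>
    obtain ⟨P, hP, hP'⟩ := ha
    by_cases hj : j = i
    · subst hj
      exact ⟨P * .X, by simp [hP], by simp [hP, hP', mul_comm, add_comm]⟩
    · refine ⟨P * .C ⟨_, hX j hj⟩, by simp [hP, Subfield.algebraMap_ofSubfield], ?_⟩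
      simp [hP', pderiv_X_of_ne hj, Subfield.algebraMap_ofSubfield, mul_comm]

lemma algebraMap_X_mem_of_pderiv_ne_zero {p : ℕ} [Fact p.Prime] [CharP k p] {L : Subfield k} {i : σ}
    (hC : ∀ r, algebraMap (MvPolynomial σ K) k (C r) ∈ L)
    (hX : ∀ j ≠ i, algebraMap (MvPolynomial σ K) k (X j) ∈ L)
    (hXi : algebraMap (MvPolynomial σ K) k (X i) ^ p ∈ L) {q : MvPolynomial σ K}
    (hq : algebraMap _ k q = 0) (hqi : algebraMap _ k (pderiv i q) ≠ 0) :
    algebraMap (MvPolynomial σ K) k (X i) ∈ L := by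
  by_contra hxL
  obtain ⟨P, hP, hP'⟩ := exists_aeval_X_eq hC hX q
  refine hqi (hP' ▸ aeval_derivative_eq_zero_of_notMem_range (a := (⟨_, hXi⟩ : L)) rfl ?_
    (hP.trans hq))
  rintro ⟨b, hb⟩
  exact hxL (hb ▸ b.2)

end AlgebraMapToField

lemma charP_of_algebra (A k : Type*) [CommRing A] [CommRing k] [Nontrivial k] [Algebra A k] (p : ℕ)
    [Fact p.Prime] [CharP A p] : CharP k p :=
  (CharP.charP_iff_prime_eq_zero Fact.out).mpr <| by
    rw [← map_natCast (algebraMap A k), CharP.cast_eq_zero, map_zero]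

lemma pderivConstants_le_derivationKer {σ K M : Type*} [CommRing K] [IsDomain K]
    [AddCommGroup M] [Module (MvPolynomial σ K) M] [Module K M] (p : ℕ) [CharP K p]
    (d : Derivation K (MvPolynomial σ K) M) : pderivConstants σ K ≤ derivationKer d := by
  rw [← adjoin_range_X_pow p]
  refine Algebra.adjoin_le ?_
  rintro _ ⟨i, rfl⟩
  change d (X i ^ p) = 0
  rw [d.leibniz_pow, ← Nat.cast_smul_eq_nsmul (MvPolynomial σ K), CharP.cast_eq_zero, zero_smul]

section ConstantsAdjoin

variable {σ K k : Type*} [CommRing K] [Field k] [Algebra (MvPolynomial σ K) k]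

variable (k) in
/-- The subfield of `k` generated by the images of the constants and of the polynomials in `S`. -/
noncomputable def constantsAdjoin (S : Set (MvPolynomial σ K)) : Subfield k :=
  Subfield.closure (algebraMap (MvPolynomial σ K) k '' (S ∪ pderivConstants σ K))

variable {S : Set (MvPolynomial σ K)} {x y : MvPolynomial σ K}

lemma algebraMap_mem_constantsAdjoin (hx : x ∈ S) : algebraMap _ k x ∈ constantsAdjoin k S :=
  Subfield.subset_closure (Set.mem_image_of_mem _ (.inl hx))

lemma algebraMap_mem_constantsAdjoin_of_mem_pderivConstants (hx : x ∈ pderivConstants σ K) :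
    algebraMap _ k x ∈ constantsAdjoin k S :=
  Subfield.subset_closure (Set.mem_image_of_mem _ (.inr hx))

lemma algebraMap_mem_constantsAdjoin_of_X_mem
    (hX : ∀ i, algebraMap (MvPolynomial σ K) k (X i) ∈ constantsAdjoin k S)
    (q : MvPolynomial σ K) : algebraMap _ k q ∈ constantsAdjoin k S :=
  algebraMap_mem_of_X_mem (fun r => algebraMap_mem_constantsAdjoin_of_mem_pderivConstants
    (Subalgebra.algebraMap_mem _ r)) hX q

lemma exists_mul_eq_of_mem_constantsAdjoin {C : Subalgebra K (MvPolynomial σ K)}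
    (hC : pderivConstants σ K ≤ C) (hS : S ⊆ C) (hx : algebraMap _ k x ∈ constantsAdjoin k S) :
    ∃ a ∈ C, ∃ b ∈ C, algebraMap _ k b ≠ 0 ∧ algebraMap _ k (x * b) = algebraMap _ k a := by
  have hSC : S ∪ pderivConstants σ K ⊆ C.toSubring := Set.union_subset hS hC
  simpa only [map_mul, Subalgebra.mem_toSubring] using
    exists_mul_eq_of_mem_closure (Subfield.closure_mono (Set.image_mono hSC) hx)

lemma constantsAdjoin_exchange (p : ℕ) [Fact p.Prime] [CharP K p]
    (hy : algebraMap _ k y ∈ constantsAdjoin k (insert x S))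
    (hyS : algebraMap _ k y ∉ constantsAdjoin k S) :
    algebraMap _ k x ∈ constantsAdjoin k (insert y S) := by
  have := charP_of_algebra (MvPolynomial σ K) k p
  simp only [constantsAdjoin, Set.insert_union, Set.image_insert_eq] at hy hyS ⊢
  refine mem_closure_insert_exchange (p := p) ?_ hy hyS
  rw [← map_pow]
  exact algebraMap_mem_constantsAdjoin_of_mem_pderivConstants (pow_mem_pderivConstants p x)

lemma algebraMap_X_mem_constantsAdjoin (p : ℕ) [Fact p.Prime] [CharP K p] {i : σ}
    (hX : ∀ j ≠ i, X j ∈ S) {q : MvPolynomial σ K}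
    (hq : algebraMap _ k q = 0) (hqi : algebraMap _ k (pderiv i q) ≠ 0) :
    algebraMap (MvPolynomial σ K) k (X i) ∈ constantsAdjoin k S := by
  have := charP_of_algebra (MvPolynomial σ K) k p
  refine algebraMap_X_mem_of_pderiv_ne_zero (p := p)
    (fun r => algebraMap_mem_constantsAdjoin_of_mem_pderivConstants
      (Subalgebra.algebraMap_mem _ r))
    (fun j hj => algebraMap_mem_constantsAdjoin (hX j hj)) ?_ hq hqi
  rw [← map_pow]
  exact algebraMap_mem_constantsAdjoin_of_mem_pderivConstants (pow_mem_pderivConstants p (X i))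

lemma derivation_eq_zero_of_mem_constantsAdjoin [IsDomain K] [Module K k] (p : ℕ) [CharP K p]
    (δ : Derivation K (MvPolynomial σ K) k)
    (hδ : ∀ q : MvPolynomial σ K, algebraMap _ k q = 0 → δ q = 0) (hS : ∀ s ∈ S, δ s = 0)
    (hx : algebraMap _ k x ∈ constantsAdjoin k S) : δ x = 0 := by
  obtain ⟨a, ha, b, hb, hb0, hab⟩ :=
    exists_mul_eq_of_mem_constantsAdjoin (pderivConstants_le_derivationKer p δ) hS hx
  have h := hδ (x * b - a) (by rw [map_sub, hab, sub_self])
  rw [map_sub, δ.leibniz, show δ a = 0 from ha, show δ b = 0 from hb, smul_zero, zero_add,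
    sub_zero, Algebra.smul_def] at h
  exact (mul_eq_zero.mp h).resolve_left hb0

end ConstantsAdjoin

section TwoVariables

variable {K : Type*} [CommRing K]

lemma fin_two_eq_or_eq_of_ne {i j : Fin 2} (hij : i ≠ j) (l : Fin 2) : l = i ∨ l = j := by
  omega

section Field

variable {k : Type*} [Field k] [Algebra (MvPolynomial (Fin 2) K) k]

lemma algebraMap_mem_constantsAdjoin_of_X_mem_of_X_mem {S : Set (MvPolynomial (Fin 2) K)}
    {i j : Fin 2} (hij : i ≠ j)
    (hi : algebraMap (MvPolynomial (Fin 2) K) k (X i) ∈ constantsAdjoin k S) (hj : X j ∈ S)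
    (q : MvPolynomial (Fin 2) K) : algebraMap _ k q ∈ constantsAdjoin k S := by
  refine algebraMap_mem_constantsAdjoin_of_X_mem (fun l => ?_) q
  rcases fin_two_eq_or_eq_of_ne hij l with rfl | rfl
  · exact hi
  · exact algebraMap_mem_constantsAdjoin hj

/-- Otherwise the exchange property would put the variables into the field generated by `f` and
`q`, on which `d` vanishes. -/
lemma algebraMap_mem_constantsAdjoin_singleton_of_apply_eq_zero [IsDomain K] [Algebra K k]
    [IsScalarTower K (MvPolynomial (Fin 2) K) k] [FaithfulSMul (MvPolynomial (Fin 2) K) k]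
    (p : ℕ) [Fact p.Prime] [CharP K p]
    {d : Derivation K (MvPolynomial (Fin 2) K) (MvPolynomial (Fin 2) K)} (hd : d ≠ 0)
    {f q : MvPolynomial (Fin 2) K} (hfB : ∃ i, pderiv i f ≠ 0) (hf : d f = 0)
    (hq : d q = 0) : algebraMap _ k q ∈ constantsAdjoin k {f} := by
  have hinj : ∀ {a : MvPolynomial (Fin 2) K}, algebraMap _ k a = 0 ↔ a = 0 :=
    FaithfulSMul.algebraMap_eq_zero_iff _ k
  have hvanish (D : Derivation K (MvPolynomial (Fin 2) K) (MvPolynomial (Fin 2) K))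
      {S : Set (MvPolynomial (Fin 2) K)} {x : MvPolynomial (Fin 2) K} (hS : ∀ s ∈ S, D s = 0)
      (hx : algebraMap _ k x ∈ constantsAdjoin k S) : D x = 0 :=
    hinj.mp <| derivation_eq_zero_of_mem_constantsAdjoin p ((Algebra.linearMap _ k).compDer D)
      (fun a ha => by rw [hinj.mp ha, map_zero]) (fun s hs => hinj.mpr (hS s hs)) hx
  obtain ⟨i, hi⟩ := hfB
  obtain ⟨j, hij⟩ : ∃ j : Fin 2, i ≠ j := ⟨i + 1, by omega⟩
  have hXi : algebraMap (MvPolynomial (Fin 2) K) k (X i) ∈ constantsAdjoin k {f, X j} := by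
    refine constantsAdjoin_exchange p ?_ fun h =>
      hi (hvanish (pderiv i) (by simp [hij.symm]) h)
    exact algebraMap_mem_constantsAdjoin_of_X_mem_of_X_mem hij
      (algebraMap_mem_constantsAdjoin (by simp)) (by simp) f
  by_contra hqf
  have hXj : algebraMap (MvPolynomial (Fin 2) K) k (X j) ∈ constantsAdjoin k {q, f} :=
    constantsAdjoin_exchange p (algebraMap_mem_constantsAdjoin_of_X_mem_of_X_mem hij
      (Set.pair_comm f (X j) ▸ hXi) (by simp) q) hqf
  have hdj : d (X j) = 0 := hvanish d (by simp [hf, hq]) hXj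
  refine hd (MvPolynomial.derivation_ext fun l => ?_)
  rcases fin_two_eq_or_eq_of_ne hij l with rfl | rfl
  · exact hvanish d (by simp [hf, hdj]) hXi
  · exact hdj

lemma algebraMap_mem_constantsAdjoin_empty_of_dvd_pderiv [IsDomain K] [Algebra K k]
    [IsScalarTower K (MvPolynomial (Fin 2) K) k] (p : ℕ) [Fact p.Prime] [CharP K p]
    {f π : MvPolynomial (Fin 2) K}
    (hker : ∀ q : MvPolynomial (Fin 2) K, algebraMap _ k q = 0 ↔ π ∣ q)
    (hπf : ∀ i, π ∣ pderiv i f) (hπ : ∃ i, pderiv i π ≠ 0) :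
    algebraMap _ k f ∈ constantsAdjoin k (∅ : Set (MvPolynomial (Fin 2) K)) := by
  obtain ⟨i, hi⟩ := hπ
  obtain ⟨j, hij⟩ : ∃ j : Fin 2, i ≠ j := ⟨i + 1, by omega⟩
  have hXi : algebraMap (MvPolynomial (Fin 2) K) k (X i) ∈ constantsAdjoin k {X j} :=
    algebraMap_X_mem_constantsAdjoin p
      (fun l hl => congrArg X ((fin_two_eq_or_eq_of_ne hij l).resolve_left hl))
      ((hker π).mpr dvd_rfl) ((hker _).not.mpr (not_dvd_pderiv hi))
  by_contra hf
  have hXj : algebraMap (MvPolynomial (Fin 2) K) k (X j) ∈ constantsAdjoin k {f} := by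
    rw [← LawfulSingleton.insert_empty_eq]
    refine constantsAdjoin_exchange p ?_ hf
    rw [LawfulSingleton.insert_empty_eq]
    exact algebraMap_mem_constantsAdjoin_of_X_mem_of_X_mem hij hXi (Set.mem_singleton _) f
  let D : Derivation K (MvPolynomial (Fin 2) K) (MvPolynomial (Fin 2) K) :=
    pderiv i π • pderiv j - pderiv j π • pderiv i
  have hD : ∀ q, D q = pderiv i π * pderiv j q - pderiv j π * pderiv i q := fun q => by simp [D]
  have hDπ : D π = 0 := by rw [hD]; ring
  have hDdvd : ∀ q, π ∣ q → π ∣ D q := by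
    rintro _ ⟨h, rfl⟩
    rw [D.leibniz, hDπ, smul_zero, add_zero]
    exact dvd_mul_right π (D h)
  have hDf : π ∣ D f := hD f ▸ dvd_sub ((hπf j).mul_left _) ((hπf i).mul_left _)
  refine not_dvd_pderiv hi ?_
  suffices h : π ∣ D (X j) by simpa [hD, pderiv_X_of_ne hij.symm] using h
  exact (hker _).mp <| derivation_eq_zero_of_mem_constantsAdjoin p
    ((Algebra.linearMap _ k).compDer D) (fun q hq => (hker _).mpr (hDdvd q ((hker q).mp hq)))
    (by simpa using (hker _).mpr hDf) hXj

end Field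

lemma exists_dvd_mul_sub_of_prime [IsDomain K] (p : ℕ) [Fact p.Prime] [CharP K p]
    {f π : MvPolynomial (Fin 2) K} (hπ : Prime π)
    (hπf : ∀ i, π ∣ pderiv i f) (hπB : ∃ i, pderiv i π ≠ 0) :
    ∃ β ∈ pderivConstants (Fin 2) K, ∃ γ ∈ pderivConstants (Fin 2) K,
      ¬ π ∣ β ∧ π ∣ f * β - γ := by
  have : (Ideal.span {π}).IsPrime := (Ideal.span_singleton_prime hπ.ne_zero).mpr hπ
  have hker (q : MvPolynomial (Fin 2) K) :
      algebraMap _ (Ideal.span {π}).ResidueField q = 0 ↔ π ∣ q :=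
    Ideal.algebraMap_residueField_eq_zero.trans Ideal.mem_span_singleton
  obtain ⟨γ, hγ, β, hβ, hβπ, h⟩ := exists_mul_eq_of_mem_constantsAdjoin le_rfl
    (Set.empty_subset _) (algebraMap_mem_constantsAdjoin_empty_of_dvd_pderiv p hker hπf hπB)
  refine ⟨β, hβ, γ, hγ, (hker β).not.mp hβπ, (hker _).mp ?_⟩
  rw [map_sub, h, sub_self]

end TwoVariables

section LeadingCoefficient

variable {R A : Type*} [CommRing R] [CommRing A] [Algebra R A] {C : Subalgebra R A}

lemma apply_aeval_eq_derivative_smul {M : Type*} [AddCommGroup M] [Module A M] [Module R M]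
    {D : Derivation R A M} (hC : C ≤ derivationKer D) (P : Polynomial C) (f : A) :
    D (Polynomial.aeval f P) = Polynomial.aeval f P.derivative • D f := by
  induction P using Polynomial.induction_on' with
  | add P Q hP hQ => simp only [map_add, add_smul, hP, hQ]
  | monomial n c =>
    simp only [Polynomial.derivative_monomial, Polynomial.aeval_monomial, D.leibniz,
      show D (algebraMap C A c) = 0 from hC c.2, smul_zero, add_zero, D.leibniz_pow, map_mul,
      map_natCast]
    rw [← Nat.cast_smul_eq_nsmul A, smul_smul, smul_smul, mul_assoc]

lemma mem_adjoin_insert_iff_exists_aeval {S : Set A} (hS : Algebra.adjoin R S = C) {f q : A} :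
    q ∈ Algebra.adjoin R (insert f S) ↔ ∃ P : Polynomial C, Polynomial.aeval f P = q := by
  subst hS
  rw [Set.insert_eq, Set.union_comm, Algebra.adjoin_union_eq_adjoin_adjoin,
    Algebra.adjoin_singleton_eq_range_aeval]
  rfl

lemma dvd_factorial_mul_coeff_of_mul_eq_aeval [IsDomain A] {D : Derivation R A A}
    (hC : C ≤ derivationKer D) {f : A} (hf : D f ≠ 0) {S : Set A}
    (hS : ∀ q ∈ S, ∃ t ∈ S, D q = t * D f) {c : C} {m : ℕ} {P : Polynomial C} (hP : P.natDegree ≤ m)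
    (hcP : ∃ q ∈ S, c * q = Polynomial.aeval f P) :
    (c : A) ∣ m.factorial * P.coeff m := by
  induction m generalizing P with
  | zero =>
    obtain ⟨q, -, hq⟩ := hcP
    rw [Polynomial.eq_C_of_natDegree_le_zero hP, Polynomial.aeval_C] at hq
    exact ⟨q, by rw [hq]; simp⟩
  | succ m ih =>
    obtain ⟨q, hqS, hq⟩ := hcP
    obtain ⟨t, htS, ht⟩ := hS q hqS
    have hderiv : (c : A) * t = Polynomial.aeval f P.derivative := by
      refine mul_right_cancel₀ hf ?_
      rw [← smul_eq_mul (Polynomial.aeval f _), ← apply_aeval_eq_derivative_smul hC, ← hq,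
        D.leibniz, show D (c : A) = 0 from hC c.2, smul_zero, add_zero, smul_eq_mul, ht, mul_assoc]
    have h := ih ((Polynomial.natDegree_derivative_le P).trans (by omega)) ⟨t, htS, hderiv⟩
    rw [Polynomial.coeff_derivative] at h
    rw [Nat.factorial_succ]
    push_cast at h ⊢
    convert h using 1
    ring

end LeadingCoefficient

section DifferentialGenerators

variable {σ K : Type*} [CommRing K] {d : Derivation K (MvPolynomial σ K) (MvPolynomial σ K)}
  {f : MvPolynomial σ K}

lemma mem_pderivConstants_of_mul_mem [IsDomain K] {c r : MvPolynomial σ K}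
    (hc : c ∈ pderivConstants σ K) (hc0 : c ≠ 0) (hcr : c * r ∈ pderivConstants σ K) :
    r ∈ pderivConstants σ K := by
  rw [mem_pderivConstants] at hc hcr ⊢
  simpa [pderiv_mul, hc, hc0] using hcr

/-- A nonconstant element `f` of `ker d` such that the differential of every element of `ker d`
is a multiple `t df` of the differential of `f`, with `t` again in `ker d`. -/
structure IsDifferentialGenerator (d : Derivation K (MvPolynomial σ K) (MvPolynomial σ K))
    (f : MvPolynomial σ K) : Prop where
  apply_eq_zero : d f = 0
  exists_pderiv_ne_zero : ∃ i, pderiv i f ≠ 0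
  exists_pderiv_eq_mul : ∀ q, d q = 0 → ∃ t, d t = 0 ∧ ∀ i, pderiv i q = t * pderiv i f

lemma exists_mul_eq_aeval [IsDomain K] (p : ℕ) [Fact p.Prime] [CharP K p]
    {d : Derivation K (MvPolynomial (Fin 2) K) (MvPolynomial (Fin 2) K)} (hd : d ≠ 0)
    {f q : MvPolynomial (Fin 2) K} (hfB : ∃ i, pderiv i f ≠ 0) (hf : d f = 0) (hq : d q = 0) :
    ∃ c : pderivConstants (Fin 2) K, c ≠ 0 ∧
      ∃ P : Polynomial (pderivConstants (Fin 2) K), c * q = Polynomial.aeval f P := by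
  let k := FractionRing (MvPolynomial (Fin 2) K)
  let C := (Algebra.adjoin (pderivConstants (Fin 2) K) {f}).restrictScalars K
  have hBC : pderivConstants (Fin 2) K ≤ C := fun c hc =>
    Subalgebra.algebraMap_mem _ (⟨c, hc⟩ : pderivConstants (Fin 2) K)
  have hfC : {f} ⊆ (C : Set (MvPolynomial (Fin 2) K)) := Algebra.subset_adjoin
  obtain ⟨u, hu, v, hv, hv0, huv⟩ := exists_mul_eq_of_mem_constantsAdjoin hBC hfC
    (algebraMap_mem_constantsAdjoin_singleton_of_apply_eq_zero (k := k) p hd hfB hf hq)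
  replace huv : q * v = u := IsFractionRing.injective _ _ huv
  replace hv0 : v ≠ 0 := fun h => hv0 (by rw [h, map_zero])
  have hvu : v ^ (p - 1) * u ∈ C := C.mul_mem (C.pow_mem hv _) hu
  obtain ⟨P, hP⟩ : ∃ P : Polynomial (pderivConstants (Fin 2) K),
      Polynomial.aeval f P = v ^ (p - 1) * u := by
    rwa [Subalgebra.mem_restrictScalars, Algebra.adjoin_singleton_eq_range_aeval] at hvu
  refine ⟨⟨v ^ p, pow_mem_pderivConstants p v⟩, ?_, P, ?_⟩
  · exact fun h => pow_ne_zero p hv0 (congrArg Subtype.val h)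
  · rw [hP, ← huv, mul_left_comm, pow_sub_one_mul (Fact.out : p.Prime).ne_zero, mul_comm]

namespace IsDifferentialGenerator

lemma of_forall_exists_aeval [IsDomain K] (p : ℕ) [CharP K p] (hf : d f = 0)
    (hfB : ∃ i, pderiv i f ≠ 0)
    (h : ∀ q, d q = 0 → ∃ P : Polynomial (pderivConstants σ K), Polynomial.aeval f P = q) :
    IsDifferentialGenerator d f := by
  refine ⟨hf, hfB, fun q hq => ?_⟩
  obtain ⟨P, rfl⟩ := h q hq
  refine ⟨Polynomial.aeval f P.derivative, ?_, fun i => ?_⟩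
  · rw [apply_aeval_eq_derivative_smul (pderivConstants_le_derivationKer p d), hf, smul_zero]
  · exact apply_aeval_eq_derivative_smul (iInf_le _ i) P f

lemma dvd_coeff_of_mul_eq_aeval [IsDomain K] (p : ℕ) [Fact p.Prime] [CharP K p]
    (hf : IsDifferentialGenerator d f) {P : Polynomial (pderivConstants σ K)} {m : ℕ}
    (hP : P.natDegree ≤ m) (hm : m < p) {c : pderivConstants σ K} {q : MvPolynomial σ K}
    (hq : d q = 0) (hcq : c * q = Polynomial.aeval f P) :
    (c : MvPolynomial σ K) ∣ P.coeff m := by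
  obtain ⟨i, hi⟩ := hf.exists_pderiv_ne_zero
  have hunit : IsUnit (m.factorial : MvPolynomial σ K) :=
    (IsUnit.natCast_factorial_iff_of_charP p).mpr hm
  refine (hunit.dvd_mul_left).mp <| dvd_factorial_mul_coeff_of_mul_eq_aeval (S := {q | d q = 0})
    (iInf_le _ i) hi (fun q hq => ?_) hP ⟨q, hq, hcq⟩
  obtain ⟨t, ht, htq⟩ := hf.exists_pderiv_eq_mul q hq
  exact ⟨t, ht, htq i⟩

lemma exists_aeval_eq_of_mul_eq_aeval [IsDomain K] (p : ℕ) [Fact p.Prime] [CharP K p]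
    (hf : IsDifferentialGenerator d f) {n : ℕ} (hn : n ≤ p)
    {P : Polynomial (pderivConstants σ K)} (hP : P.degree < n) {c : pderivConstants σ K}
    (hc : c ≠ 0) {q : MvPolynomial σ K} (hq : d q = 0) (hcq : c * q = Polynomial.aeval f P) :
    ∃ Q : Polynomial (pderivConstants σ K), Polynomial.aeval f Q = q := by
  have hc0 : (c : MvPolynomial σ K) ≠ 0 := by simpa using hc
  induction n generalizing P q with
  | zero =>
    refine ⟨0, ?_⟩
    have hP0 : P = 0 := by simpa using hP
    rw [hP0, map_zero, mul_eq_zero] at hcq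
    rw [map_zero, hcq.resolve_left hc0]
  | succ n ih =>
    have hdeg : P.natDegree ≤ n := by
      rw [Polynomial.natDegree_le_iff_degree_le]
      exact Order.le_of_lt_succ hP
    obtain ⟨r, hr⟩ := hf.dvd_coeff_of_mul_eq_aeval p hdeg hn hq hcq
    have hrB : r ∈ pderivConstants σ K :=
      mem_pderivConstants_of_mul_mem c.2 hc0 (hr ▸ (P.coeff n).2)
    have hdr : d r = 0 := pderivConstants_le_derivationKer p d hrB
    have hsplit : c * r * f ^ n + Polynomial.aeval f (P.erase n) = c * q := by
      have h := congrArg (Polynomial.aeval f) (P.monomial_add_erase n)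
      rwa [map_add, Polynomial.aeval_monomial, ← hcq,
        show algebraMap _ (MvPolynomial σ K) (P.coeff n) = c * r from hr] at h
    have herase : (P.erase n).degree < n := by
      refine (Polynomial.degree_lt_iff_coeff_zero _ _).mpr fun l hl => ?_
      rw [Polynomial.coeff_erase, ite_eq_left_iff]
      exact fun hln => Polynomial.coeff_eq_zero_of_natDegree_lt (by omega)
    obtain ⟨Q, hQ⟩ := ih (by omega) herase (q := q - r * f ^ n)
      (by simp [d.leibniz_pow, hf.apply_eq_zero, hq, hdr]) (by linear_combination -hsplit)
    refine ⟨Q + .monomial n ⟨r, hrB⟩, ?_⟩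
    rw [map_add, hQ, Polynomial.aeval_monomial]
    exact sub_add_cancel q _

lemma dvd_pow_of_dvd_mul_sub_pow [IsDomain K] (p : ℕ) [Fact p.Prime] [CharP K p]
    (hf : IsDifferentialGenerator d f) {c β γ : MvPolynomial σ K} (hc : c ∈ pderivConstants σ K)
    (hc0 : c ≠ 0) (hβ : β ∈ pderivConstants σ K) (hγ : γ ∈ pderivConstants σ K) {m : ℕ}
    (hm : m < p) (h : c ∣ (f * β - γ) ^ m) : c ∣ β ^ m := by
  obtain ⟨q, hq⟩ := h
  let L : Polynomial (pderivConstants σ K) := .C ⟨β, hβ⟩ * .X - .C ⟨γ, hγ⟩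
  have hL : L.natDegree ≤ 1 := by simp only [L]; compute_degree
  have hdc : ∀ {x}, x ∈ pderivConstants σ K → d x = 0 :=
    fun hx => pderivConstants_le_derivationKer p d hx
  have hdq : d q = 0 := by
    have h := congrArg d hq
    rw [d.leibniz_pow, map_sub, d.leibniz, d.leibniz, hf.apply_eq_zero, hdc hβ, hdc hγ,
      hdc hc] at h
    simpa [hc0] using h
  have hcoeff : (L ^ m).coeff m = (⟨β, hβ⟩ : pderivConstants σ K) ^ m := by
    simpa [L, Polynomial.coeff_C] using Polynomial.coeff_pow_of_natDegree_le (m := m) hL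
  have hLf : c * q = Polynomial.aeval f (L ^ m) := by
    rw [← hq, map_pow, mul_comm f]
    simp [L]
  have hdvd := hf.dvd_coeff_of_mul_eq_aeval p (c := ⟨c, hc⟩)
    (by simpa using Polynomial.natDegree_pow_le_of_le m hL) hm hdq hLf
  rwa [hcoeff] at hdvd

lemma exists_aeval_eq {d : Derivation K (MvPolynomial (Fin 2) K) (MvPolynomial (Fin 2) K)}
    {f : MvPolynomial (Fin 2) K} [IsDomain K] (p : ℕ) [Fact p.Prime] [CharP K p] (hd : d ≠ 0)
    (hf : IsDifferentialGenerator d f) {q : MvPolynomial (Fin 2) K} (hq : d q = 0) :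
    ∃ P : Polynomial (pderivConstants (Fin 2) K), Polynomial.aeval f P = q := by
  obtain ⟨c, hc, P, hcP⟩ :=
    exists_mul_eq_aeval p hd hf.exists_pderiv_ne_zero hf.apply_eq_zero hq
  obtain ⟨Q, hQ, hQP⟩ := exists_degree_lt_aeval_eq (f := f)
    (a := ⟨f ^ p, pow_mem_pderivConstants p f⟩) (Fact.out : p.Prime).ne_zero rfl P
  exact hf.exists_aeval_eq_of_mul_eq_aeval p le_rfl hQ hc hq (hcP.trans hQP.symm)

lemma not_forall_dvd_pderiv {d : Derivation K (MvPolynomial (Fin 2) K) (MvPolynomial (Fin 2) K)}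
    {f π : MvPolynomial (Fin 2) K} [IsDomain K] (p : ℕ) [Fact p.Prime] [CharP K p]
    (hf : IsDifferentialGenerator d f) (hπ : Prime π) : ¬ ∀ i, π ∣ pderiv i f := by
  intro hπf
  by_cases hπB : π ∈ pderivConstants (Fin 2) K
  · obtain ⟨γ, hγ, hπγ⟩ := exists_mem_pderivConstants_dvd_sub p hπB hπf
    exact hπ.not_isUnit <| isUnit_of_dvd_one <| by
      simpa using hf.dvd_pow_of_dvd_mul_sub_pow (β := 1) (m := 1) p hπB hπ.ne_zero (one_mem _) hγ
        (Fact.out : p.Prime).one_lt (by simpa using hπγ)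
  rw [mem_pderivConstants, not_forall] at hπB
  obtain ⟨β, hβ, γ, hγ, hπβ, w, hw⟩ := exists_dvd_mul_sub_of_prime p hπ hπf hπB
  obtain ⟨i, hi⟩ := hπB
  have hπw : π ∣ w := by
    have h := congrArg (pderiv i) hw
    rw [map_sub, pderiv_mul, mem_pderivConstants.mp hβ, mem_pderivConstants.mp hγ, pderiv_mul] at h
    have hπiw : π ∣ pderiv i π * w := by
      obtain ⟨a, ha⟩ := hπf i
      exact ⟨a * β - pderiv i w, by linear_combination -h + β * ha⟩
    exact (hπ.dvd_or_dvd hπiw).resolve_left (not_dvd_pderiv hi)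
  have hp : 2 ≤ p := (Fact.out : p.Prime).two_le
  have hπp : π ^ p ∣ (f * β - γ) ^ (p - 1) := by
    calc π ^ p ∣ (π ^ 2) ^ (p - 1) := by rw [← pow_mul]; exact pow_dvd_pow _ (by omega)
      _ ∣ _ := pow_dvd_pow_of_dvd (by rw [hw, sq]; exact mul_dvd_mul_left π hπw) _
  have h := hf.dvd_pow_of_dvd_mul_sub_pow p (pow_mem_pderivConstants p π) (pow_ne_zero p hπ.ne_zero)
    hβ hγ (by omega) hπp
  exact hπβ (hπ.dvd_of_dvd_pow ((dvd_pow_self π (by omega)).trans h))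

end IsDifferentialGenerator

end DifferentialGenerators

section DualForm

variable {K : Type*} [CommRing K]
  {d : Derivation K (MvPolynomial (Fin 2) K) (MvPolynomial (Fin 2) K)}
  {f g q t : MvPolynomial (Fin 2) K}

lemma derivation_apply_eq_pderiv
    (d : Derivation K (MvPolynomial (Fin 2) K) (MvPolynomial (Fin 2) K))
    (q : MvPolynomial (Fin 2) K) : d q = d (X 0) * pderiv 0 q + d (X 1) * pderiv 1 q := by
  have h : d = d (X 0) • pderiv 0 + d (X 1) • pderiv 1 :=
    MvPolynomial.derivation_ext fun i => by fin_cases i <;> simp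
  simpa using congr($h q)

/-- The divergence `d*` of a derivation of `K[x, y]`. -/
noncomputable def divergence (d : Derivation K (MvPolynomial (Fin 2) K) (MvPolynomial (Fin 2) K)) :
    MvPolynomial (Fin 2) K :=
  pderiv 0 (d (X 0)) + pderiv 1 (d (X 1))

/-- The coefficients of the `1`-form `ω = d(y) dx - d(x) dy`, which is dual to `d` in the sense
that `d q = 0` if and only if `dq ∧ ω = 0`. -/
noncomputable def dualForm (d : Derivation K (MvPolynomial (Fin 2) K) (MvPolynomial (Fin 2) K)) :
    Fin 2 → MvPolynomial (Fin 2) K :=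
  ![d (X 1), -d (X 0)]

lemma exists_dualForm_ne_zero (hd : d ≠ 0) : ∃ i, dualForm d i ≠ 0 := by
  contrapose! hd
  simp only [Fin.forall_fin_two, dualForm, Matrix.cons_val_zero, Matrix.cons_val_one,
    neg_eq_zero] at hd
  exact MvPolynomial.derivation_ext fun i => by fin_cases i <;> simp [hd.1, hd.2]

lemma apply_eq_zero_of_pderiv_eq_mul_dualForm (h : ∀ i, pderiv i q = t * dualForm d i) :
    d q = 0 := by
  rw [derivation_apply_eq_pderiv, h 0, h 1]
  simp only [dualForm, Matrix.cons_val_zero, Matrix.cons_val_one]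
  ring

lemma apply_add_mul_divergence_eq_zero (h : ∀ i, pderiv i q = t * dualForm d i) :
    d t + t * divergence d = 0 := by
  have hcomm := pderiv_pderiv_comm 0 1 q
  rw [h 0, h 1] at hcomm
  simp only [dualForm, Matrix.cons_val_zero, Matrix.cons_val_one, pderiv_mul, map_neg] at hcomm
  rw [derivation_apply_eq_pderiv d t, divergence]
  linear_combination -hcomm

/-- `g` is a potential of the dual form of `d`, that is, `dg = ω`; equivalently `d = d_g`. -/
def IsPotential (d : Derivation K (MvPolynomial (Fin 2) K) (MvPolynomial (Fin 2) K))
    (g : MvPolynomial (Fin 2) K) : Prop :=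
  ∀ i, pderiv i g = dualForm d i

lemma isPotential_iff_eq_jacobian :
    IsPotential d g ↔ ∀ q, d q = pderiv 0 g * pderiv 1 q - pderiv 1 g * pderiv 0 q := by
  refine ⟨fun h q => ?_, fun h => ?_⟩
  · rw [derivation_apply_eq_pderiv d q, h 0, h 1]
    simp only [dualForm, Matrix.cons_val_zero, Matrix.cons_val_one]
    ring
  · simp [IsPotential, Fin.forall_fin_two, dualForm, h (X 0), h (X 1)]

namespace IsPotential

lemma pderiv_eq_one_mul_dualForm (hg : IsPotential d g) (i : Fin 2) :
    pderiv i g = 1 * dualForm d i := by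
  rw [hg, one_mul]

lemma apply_eq_zero (hg : IsPotential d g) : d g = 0 :=
  apply_eq_zero_of_pderiv_eq_mul_dualForm hg.pderiv_eq_one_mul_dualForm

lemma divergence_eq_zero (hg : IsPotential d g) : divergence d = 0 := by
  simpa using apply_add_mul_divergence_eq_zero hg.pderiv_eq_one_mul_dualForm

lemma exists_pderiv_ne_zero (hd : d ≠ 0) (hg : IsPotential d g) : ∃ i, pderiv i g ≠ 0 := by
  obtain ⟨i, hi⟩ := exists_dualForm_ne_zero hd
  exact ⟨i, by rwa [hg]⟩

end IsPotential

section Coprime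

lemma isUnit_of_forall_dvd_dualForm (hcop : IsRelPrime (d (X 0)) (d (X 1)))
    (h : ∀ i, q ∣ dualForm d i) : IsUnit q :=
  hcop (by simpa [dualForm] using h 1) (by simpa [dualForm] using h 0)

variable [IsDomain K] [UniqueFactorizationMonoid K]

lemma exists_pderiv_eq_mul_dualForm (hcop : IsRelPrime (d (X 0)) (d (X 1))) (hq : d q = 0) :
    ∃ t, ∀ i, pderiv i q = t * dualForm d i := by
  rw [derivation_apply_eq_pderiv] at hq
  obtain ⟨t, h0, h1⟩ := exists_eq_mul_of_mul_add_mul_eq_zero hcop hq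
  exact ⟨t, Fin.forall_fin_two.mpr ⟨h0, by rw [h1]; simp [dualForm]⟩⟩

lemma IsPotential.isDifferentialGenerator (hd : d ≠ 0) (hcop : IsRelPrime (d (X 0)) (d (X 1)))
    (hg : IsPotential d g) : IsDifferentialGenerator d g := by
  refine ⟨hg.apply_eq_zero, hg.exists_pderiv_ne_zero hd, fun q hq => ?_⟩
  obtain ⟨t, ht⟩ := exists_pderiv_eq_mul_dualForm hcop hq
  refine ⟨t, ?_, fun i => by rw [ht, hg]⟩
  simpa [hg.divergence_eq_zero] using apply_add_mul_divergence_eq_zero ht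

lemma IsDifferentialGenerator.exists_isPotential (p : ℕ) [Fact p.Prime] [CharP K p]
    (hcop : IsRelPrime (d (X 0)) (d (X 1))) (hf : IsDifferentialGenerator d f) :
    ∃ g, IsPotential d g := by
  obtain ⟨h, hh⟩ := exists_pderiv_eq_mul_dualForm hcop hf.apply_eq_zero
  obtain ⟨i, hi⟩ := hf.exists_pderiv_ne_zero
  have h0 : h ≠ 0 := left_ne_zero_of_mul (hh i ▸ hi)
  have hu : IsUnit h := by
    by_contra hnu
    obtain ⟨π, hπ, hπh⟩ := WfDvdMonoid.exists_irreducible_factor hnu h0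
    exact hf.not_forall_dvd_pderiv p hπ.prime fun i => hh i ▸ hπh.mul_right _
  obtain ⟨u, rfl⟩ := hu
  refine ⟨↑u⁻¹ * f, fun i => ?_⟩
  rw [pderiv_mul, pderiv_eq_zero_of_isUnit u⁻¹.isUnit, hh, zero_mul, zero_add,
    Units.inv_mul_cancel_left]

/-- Dividing differentials by `ω` again and again lowers the degree, and stops at a polynomial
whose differential is a nonzero constant multiple of `ω`. -/
lemma exists_pderiv_eq_constant_mul_dualForm (hcop : IsRelPrime (d (X 0)) (d (X 1)))
    (hdiv : divergence d = 0) (hf : d f = 0) (hfB : ∃ i, pderiv i f ≠ 0) :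
    ∃ s, ∃ c ∈ pderivConstants (Fin 2) K, c ≠ 0 ∧ ∀ i, pderiv i s = c * dualForm d i := by
  induction hn : f.totalDegree using Nat.strong_induction_on generalizing f with
  | _ n ih =>
    obtain ⟨t, ht⟩ := exists_pderiv_eq_mul_dualForm hcop hf
    obtain ⟨i, hi⟩ := hfB
    by_cases htB : t ∈ pderivConstants (Fin 2) K
    · exact ⟨f, t, htB, left_ne_zero_of_mul (ht i ▸ hi), ht⟩
    have hdt : d t = 0 := by simpa [hdiv] using apply_add_mul_divergence_eq_zero ht
    have hlt : t.totalDegree < n :=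
      (totalDegree_le_of_dvd_of_isDomain ⟨_, ht i⟩ hi).trans_lt (hn ▸ totalDegree_pderiv_lt hi)
    exact ih _ hlt hdt (not_forall.mp (mem_pderivConstants.not.mp htB)) rfl

lemma exists_isPotential_of_divergence_eq_zero (p : ℕ) [Fact p.Prime] [CharP K p]
    (hcop : IsRelPrime (d (X 0)) (d (X 1))) (hdiv : divergence d = 0) (hf : d f = 0)
    (hfB : ∃ i, pderiv i f ≠ 0) : ∃ g, IsPotential d g := by
  obtain ⟨s, c, hc, hc0, hs⟩ := exists_pderiv_eq_constant_mul_dualForm hcop hdiv hf hfB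
  obtain ⟨s₀, hs₀, g, hg⟩ := exists_mem_pderivConstants_dvd_sub p hc fun i => ⟨_, hs i⟩
  refine ⟨g, fun i => mul_left_cancel₀ hc0 ?_⟩
  have h := congrArg (pderiv i) hg
  rw [map_sub, hs, mem_pderivConstants.mp hs₀, pderiv_mul, mem_pderivConstants.mp hc, zero_mul,
    sub_zero, zero_add] at h
  exact h.symm

lemma divergence_eq_zero_of_apply_gcd_eq_zero (p : ℕ) [CharP K p] {fbar : MvPolynomial (Fin 2) K}
    (hcop : IsRelPrime (d (X 0)) (d (X 1))) (hf : d f = 0) (hfB : ∃ i, pderiv i f ≠ 0)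
    (hdvd : ∀ i, fbar ∣ pderiv i f) (hgcd : ∀ q, (∀ i, q ∣ pderiv i f) → q ∣ fbar)
    (hfbar : d fbar = 0) : divergence d = 0 := by
  obtain ⟨h, hh⟩ := exists_pderiv_eq_mul_dualForm hcop hf
  obtain ⟨i, hi⟩ := hfB
  have h0 : h ≠ 0 := left_ne_zero_of_mul (hh i ▸ hi)
  obtain ⟨k, rfl⟩ := hgcd h fun i => ⟨_, hh i⟩
  have hk : IsUnit k := isUnit_of_forall_dvd_dualForm hcop fun i =>
    (mul_dvd_mul_iff_left h0).mp (hh i ▸ hdvd i)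
  have hdk : d k = 0 := pderivConstants_le_derivationKer p d
    (mem_pderivConstants.mpr (pderiv_eq_zero_of_isUnit hk))
  have hdh : d h = 0 := by simpa [hdk, hk.ne_zero] using hfbar
  simpa [hdh, h0] using apply_add_mul_divergence_eq_zero hh

end Coprime

end DualForm

section Kernel

variable {K : Type*} [CommRing K] [IsDomain K] {f : MvPolynomial (Fin 2) K}
  {d : Derivation K (MvPolynomial (Fin 2) K) (MvPolynomial (Fin 2) K)}

lemma adjoin_pair_X_pow (p : ℕ) [CharP K p] :
    Algebra.adjoin K ({X 0 ^ p, X 1 ^ p} : Set (MvPolynomial (Fin 2) K)) =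
      pderivConstants (Fin 2) K := by
  rw [← adjoin_range_X_pow p]
  congr 1
  ext
  simp [Fin.exists_fin_two, eq_comm]

lemma notMem_adjoin_pair_X_pow_iff (p : ℕ) [CharP K p] :
    f ∉ Algebra.adjoin K ({X 0 ^ p, X 1 ^ p} : Set (MvPolynomial (Fin 2) K)) ↔
      ∃ i, pderiv i f ≠ 0 := by
  rw [adjoin_pair_X_pow, mem_pderivConstants, not_forall]

lemma mem_adjoin_X_pow_insert_iff_exists_aeval (p : ℕ) [CharP K p] {q : MvPolynomial (Fin 2) K} :
    q ∈ Algebra.adjoin K ({X 0 ^ p, X 1 ^ p, f} : Set (MvPolynomial (Fin 2) K)) ↔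
      ∃ P : Polynomial (pderivConstants (Fin 2) K), Polynomial.aeval f P = q := by
  rw [Set.pair_comm, Set.insert_comm, mem_adjoin_insert_iff_exists_aeval (adjoin_pair_X_pow p)]

lemma setOf_apply_eq_zero_eq_adjoin_iff (p : ℕ) [Fact p.Prime] [CharP K p] (hd : d ≠ 0)
    (hfB : ∃ i, pderiv i f ≠ 0) :
    {q | d q = 0} =
        ↑(Algebra.adjoin K ({X 0 ^ p, X 1 ^ p, f} : Set (MvPolynomial (Fin 2) K))) ↔
      IsDifferentialGenerator d f := by
  simp only [Set.ext_iff, Set.mem_ofPred_eq, SetLike.mem_coe,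
    mem_adjoin_X_pow_insert_iff_exists_aeval]
  refine ⟨fun h => ?_, fun hf q => ⟨hf.exists_aeval_eq p hd, ?_⟩⟩
  · exact .of_forall_exists_aeval p ((h f).mpr ⟨.X, by simp⟩) hfB fun q => (h q).mp
  · rintro ⟨P, rfl⟩
    rw [apply_aeval_eq_derivative_smul (pderivConstants_le_derivationKer p d), hf.apply_eq_zero,
      smul_zero]

lemma exists_setOf_apply_eq_zero_eq_adjoin_iff (p : ℕ) [Fact p.Prime] [CharP K p] (hd : d ≠ 0) :
    (∃ f, f ∉ Algebra.adjoin K ({X 0 ^ p, X 1 ^ p} : Set (MvPolynomial (Fin 2) K)) ∧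
      {q | d q = 0} =
        ↑(Algebra.adjoin K ({X 0 ^ p, X 1 ^ p, f} : Set (MvPolynomial (Fin 2) K)))) ↔
      ∃ f, IsDifferentialGenerator d f := by
  refine exists_congr fun f => ?_
  rw [notMem_adjoin_pair_X_pow_iff]
  exact ⟨fun ⟨hfB, h⟩ => (setOf_apply_eq_zero_eq_adjoin_iff p hd hfB).mp h, fun hf =>
    ⟨hf.exists_pderiv_ne_zero,
      (setOf_apply_eq_zero_eq_adjoin_iff p hd hf.exists_pderiv_ne_zero).mpr hf⟩⟩

lemma setOf_apply_eq_zero_ne_adjoin_iff (p : ℕ) [CharP K p] :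
    {q | d q = 0} ≠
        ↑(Algebra.adjoin K ({X 0 ^ p, X 1 ^ p} : Set (MvPolynomial (Fin 2) K))) ↔
      ∃ f, d f = 0 ∧ ∃ i, pderiv i f ≠ 0 := by
  have hsub : pderivConstants (Fin 2) K ≤ derivationKer d := pderivConstants_le_derivationKer p d
  rw [adjoin_pair_X_pow, ← not_iff_not, not_not]
  push Not
  simp only [← mem_pderivConstants]
  exact ⟨fun h q => (Set.ext_iff.mp h q).mp, fun h => Set.Subset.antisymm h hsub⟩

end Kernel

/-- Theorem 2.  `K` a UFD of characteristic `p > 0`, `d` a nonzero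
`K`-derivation of `K[x,y]` with `d(x), d(y)` coprime.  TFAE:
(1) `K[x,y]^d = K[x^p,y^p,f]` for some `f ∈ K[x,y] \ K[x^p,y^p]`;
(2) `d` is a Jacobian derivation;
(3) `d* = 0` and `K[x,y]^d ≠ K[x^p,y^p]`;
(4) `d(f) = 0` and `d(f̄) = 0` for some `f ∈ K[x,y] \ K[x^p,y^p]`, where
    `f̄ = gcd(∂f/∂x, ∂f/∂y)`. -/
theorem theorem2_two_variables
    {K : Type*} [CommRing K] [IsDomain K] [UniqueFactorizationMonoid K]
    (p : ℕ) [Fact p.Prime] [CharP K p]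
    (d : Derivation K (MvPolynomial (Fin 2) K) (MvPolynomial (Fin 2) K))
    (hd : d ≠ 0)
    (hcop : ∀ q : MvPolynomial (Fin 2) K, q ∣ d (X 0) → q ∣ d (X 1) → IsUnit q) :
    [(∃ f : MvPolynomial (Fin 2) K,
        f ∉ Algebra.adjoin K ({X 0 ^ p, X 1 ^ p} : Set (MvPolynomial (Fin 2) K)) ∧
        {q : MvPolynomial (Fin 2) K | d q = 0} =
          ↑(Algebra.adjoin K ({X 0 ^ p, X 1 ^ p, f} : Set (MvPolynomial (Fin 2) K)))),
      (∃ g : MvPolynomial (Fin 2) K, ∀ q,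
        d q = pderiv (0 : Fin 2) g * pderiv (1 : Fin 2) q
            - pderiv (1 : Fin 2) g * pderiv (0 : Fin 2) q),
      (pderiv (0 : Fin 2) (d (X 0)) + pderiv (1 : Fin 2) (d (X 1)) = 0 ∧
        {q : MvPolynomial (Fin 2) K | d q = 0} ≠
          ↑(Algebra.adjoin K ({X 0 ^ p, X 1 ^ p} : Set (MvPolynomial (Fin 2) K)))),
      (∃ f fbar : MvPolynomial (Fin 2) K,
        f ∉ Algebra.adjoin K ({X 0 ^ p, X 1 ^ p} : Set (MvPolynomial (Fin 2) K)) ∧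
        d f = 0 ∧
        fbar ∣ pderiv (0 : Fin 2) f ∧ fbar ∣ pderiv (1 : Fin 2) f ∧
        (∀ q : MvPolynomial (Fin 2) K,
          q ∣ pderiv (0 : Fin 2) f → q ∣ pderiv (1 : Fin 2) f → q ∣ fbar) ∧
        d fbar = 0)].TFAE := by
  have hrel : IsRelPrime (d (X 0)) (d (X 1)) := fun q => hcop q
  rw [exists_setOf_apply_eq_zero_eq_adjoin_iff p hd]
  simp only [notMem_adjoin_pair_X_pow_iff p, setOf_apply_eq_zero_ne_adjoin_iff p,
    ← isPotential_iff_eq_jacobian]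
  tfae_have 1 → 2 := fun ⟨f, hf⟩ => hf.exists_isPotential p hrel
  tfae_have 2 → 1 := fun ⟨g, hg⟩ => ⟨g, hg.isDifferentialGenerator hd hrel⟩
  tfae_have 2 → 4 := by
    rintro ⟨g, hg⟩
    refine ⟨g, 1, hg.exists_pderiv_ne_zero hd, hg.apply_eq_zero, one_dvd _, one_dvd _,
      fun q h0 h1 => ?_, d.map_one_eq_zero⟩
    exact (isUnit_of_forall_dvd_dualForm hrel
      (Fin.forall_fin_two.mpr ⟨hg 0 ▸ h0, hg 1 ▸ h1⟩)).dvd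
  tfae_have 4 → 3 := by
    rintro ⟨f, fbar, hfB, hf, h0, h1, hgcd, hfbar⟩
    exact ⟨divergence_eq_zero_of_apply_gcd_eq_zero p hrel hf hfB (Fin.forall_fin_two.mpr ⟨h0, h1⟩)
      (fun q hq => hgcd q (hq 0) (hq 1)) hfbar, f, hf, hfB⟩
  tfae_have 3 → 2 := fun ⟨hdiv, f, hf, hfB⟩ =>
    exists_isPotential_of_divergence_eq_zero p hrel hdiv hf hfB
  tfae_finish
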